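/- arXiv:1007.5264 — 7 statements merged into one kernel-verified Lean document; each statement's English description precedes it below -/
import Mathlib

section
/- Let d, m, n be positive integers with m > n, gcd(m,n) = 1, and m + n odd, and set a = d*(m^2 - n^2), b = d*(2*m*n), c = d*(m^2 + n^2). Let h1 be a real number with 0 < h1 < c, and set x = b*h1/c and y = a - a*h1/c. If x, a - y, and h1 are all positive integers, then there exists an integer δ with 1 ≤ δ ≤ d - 1 such that h1 = δ*(m^2+n^2), x = δ*(2*m*n), a - y = δ*(m^2-n^2), and moreover y = (d-δ)*(m^2-n^2), b - x = (d-δ)*(2*m*n), and c - h1 = (d-δ)*(m^2+n^2). -/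
/-!
Put `s = h1 / (m ^ 2 + n ^ 2)`. By similarity the legs of `BDP` are `s * (m ^ 2 - n ^ 2)` and
`s * (2 * m * n)`. Parity and coprimality of `m` and `n` make `m ^ 2 - n ^ 2` and `2 * m * n`
coprime, so a Bézout combination of the two integral legs exhibits `s` itself as an integer; it is
the required `δ`, and `0 < h1 < c` says that `0 < δ < d`.
-/

theorem mem_of_smul_mem_of_isCoprime {R M : Type*} [CommSemiring R] [AddCommMonoid M] [Module R M]
    (N : Submodule R M) {p q : R} (hpq : IsCoprime p q) {s : M}
    (hp : p • s ∈ N) (hq : q • s ∈ N) : s ∈ N := by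
  obtain ⟨u, v, huv⟩ := hpq
  have bezout : s = u • p • s + v • q • s := by
    rw [smul_smul, smul_smul, ← add_smul, huv, one_smul]
  rw [bezout]
  exact N.add_mem (N.smul_mem u hp) (N.smul_mem v hq)

theorem exists_intCast_eq_of_isCoprime_mul {A : Type*} [Ring A] {p q : ℤ} (hpq : IsCoprime p q)
    {s : A} (hp : ∃ X : ℤ, p * s = X) (hq : ∃ Y : ℤ, q * s = Y) : ∃ k : ℤ, s = k := by
  simpa [Submodule.mem_one, eq_comm] using
    mem_of_smul_mem_of_isCoprime (1 : Submodule ℤ A) (s := s) hpq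
      (by simpa [Submodule.mem_one, eq_comm] using hp)
      (by simpa [Submodule.mem_one, eq_comm] using hq)

theorem isCoprime_sq_sub_sq_two_mul_mul {R : Type*} [CommRing R] {m n : R} (hmn : IsCoprime m n)
    (hadd : IsCoprime (m + n) 2) : IsCoprime (m ^ 2 - n ^ 2) (2 * m * n) := by
  have hsub : IsCoprime (m - n) 2 := by
    convert hadd.add_mul_left_left (-n) using 1
    ring
  have hadd_m : IsCoprime (m + n) m := by
    simpa [add_comm] using hmn.symm.add_mul_left_left 1
  have hadd_n : IsCoprime (m + n) n := by
    simpa using hmn.add_mul_left_left 1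
  have hsub_m : IsCoprime (m - n) m := by
    simpa [sub_eq_neg_add] using hmn.symm.neg_left.add_mul_left_left 1
  have hsub_n : IsCoprime (m - n) n := by
    simpa [sub_eq_add_neg] using hmn.add_mul_left_left (-1)
  rw [sq_sub_sq]
  exact ((hadd.mul_right hadd_m).mul_right hadd_n).mul_left
    ((hsub.mul_right hsub_m).mul_right hsub_n)

theorem theorem1_quantitative_general {K : Type*} [Field K] [LinearOrder K] [IsStrictOrderedRing K]
    (d : ℕ) (m n : ℤ) (hcop : IsCoprime m n) (hpar : Odd (m + n))
    (a b c : K) (ha : a = d * ((m : K) ^ 2 - n ^ 2)) (hb : b = d * (2 * m * n))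
    (hc : c = d * ((m : K) ^ 2 + n ^ 2))
    (h1 : K) (hh1pos : 0 < h1) (hh1lt : h1 < c)
    (x y : K) (hx : x = b * h1 / c) (hy : y = a - a * h1 / c)
    (hxint : ∃ X : ℤ, x = X) (hayint : ∃ Y : ℤ, a - y = Y) :
    ∃ δ : ℕ, 1 ≤ δ ∧ δ ≤ d - 1 ∧
      h1 = δ * ((m : K) ^ 2 + n ^ 2) ∧
      x = δ * (2 * m * n) ∧
      a - y = δ * ((m : K) ^ 2 - n ^ 2) ∧
      y = ((d : K) - δ) * ((m : K) ^ 2 - n ^ 2) ∧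
      b - x = ((d : K) - δ) * (2 * m * n) ∧
      c - h1 = ((d : K) - δ) * ((m : K) ^ 2 + n ^ 2) := by
  have hr : 0 < (m : K) ^ 2 + n ^ 2 :=
    pos_of_mul_pos_right (hc ▸ hh1pos.trans hh1lt) d.cast_nonneg
  have hd : (d : K) ≠ 0 := left_ne_zero_of_mul (hc ▸ (hh1pos.trans hh1lt).ne')
  obtain ⟨s, rfl⟩ : ∃ s, h1 = s * ((m : K) ^ 2 + n ^ 2) := ⟨_, (div_mul_cancel₀ h1 hr.ne').symm⟩
  have hxs : x = s * (2 * m * n) := by rw [hx, hb, hc]; field_simp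
  have hys : a - y = s * ((m : K) ^ 2 - n ^ 2) := by rw [hy, ha, hc]; field_simp; ring
  obtain ⟨k, rfl⟩ : ∃ k : ℤ, s = k := by
    refine exists_intCast_eq_of_isCoprime_mul
      (isCoprime_sq_sub_sq_two_mul_mul hcop (Int.isCoprime_two_right.mpr hpar)) ?_ ?_
    · simpa [hys, mul_comm] using hayint
    · simpa [hxs, mul_comm] using hxint
  have hk_pos : 0 < k := by exact_mod_cast pos_of_mul_pos_left hh1pos hr.le
  have hk_lt : (k : K) < d := lt_of_mul_lt_mul_right (hc ▸ hh1lt) hr.le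
  lift k to ℕ using hk_pos.le with δ
  rw [Int.cast_natCast] at hxs hys hk_lt ⊢
  norm_cast at hk_pos hk_lt
  refine ⟨δ, hk_pos, Nat.le_sub_one_of_lt hk_lt, rfl, hxs, hys, ?_, ?_, ?_⟩
  · linear_combination ha - hys
  · linear_combination hb - hxs
  · linear_combination hc

theorem theorem1_quantitative (d m n : ℕ) (hd : 0 < d) (hm : 0 < m) (hn : 0 < n)
    (hmn : n < m) (hcop : Nat.gcd m n = 1) (hpar : (m + n) % 2 = 1)
    (a b c : ℕ) (ha : a = d * (m ^ 2 - n ^ 2)) (hb : b = d * (2 * m * n))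
    (hc : c = d * (m ^ 2 + n ^ 2))
    (h1 : ℝ) (hh1pos : 0 < h1) (hh1lt : h1 < c)
    (x y : ℝ) (hx : x = b * h1 / c) (hy : y = a - a * h1 / c)
    (hxint : ∃ X : ℤ, x = X) (hayint : ∃ Y : ℤ, (a : ℝ) - y = Y)
    (hh1int : ∃ H : ℤ, h1 = H) :
    ∃ δ : ℕ, 1 ≤ δ ∧ δ ≤ d - 1 ∧
      h1 = δ * ((m : ℝ) ^ 2 + n ^ 2) ∧
      x = δ * (2 * m * n) ∧
      (a : ℝ) - y = δ * ((m : ℝ) ^ 2 - n ^ 2) ∧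
      y = ((d : ℝ) - δ) * ((m : ℝ) ^ 2 - n ^ 2) ∧
      (b : ℝ) - x = ((d : ℝ) - δ) * (2 * m * n) ∧
      (c : ℝ) - h1 = ((d : ℝ) - δ) * ((m : ℝ) ^ 2 + n ^ 2) := by
  have ha' : (a : ℝ) = d * ((m : ℝ) ^ 2 - n ^ 2) := by
    rw [ha, Nat.cast_mul, Nat.cast_sub (Nat.pow_le_pow_left hmn.le 2), Nat.cast_pow, Nat.cast_pow]
  simpa using theorem1_quantitative_general d m n (Nat.isCoprime_iff_coprime.mpr hcop)
    (by exact_mod_cast Nat.odd_iff.mpr hpar) (a : ℝ) b c (by simpa using ha') (by simp [hb])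
    (by simp [hc]) h1 hh1pos hh1lt x y hx hy hxint hayint
end

section
/- Let m, n be positive integers with m > n, gcd(m,n) = 1, and m + n odd. Then there is no real number t with 0 < t < 1 such that t*(m^2 - n^2), t*(2*m*n), and t*(m^2 + n^2) are all integers. Consequently, for a primitive Pythagorean triangle (the case d = 1), no position of the point P on the hypotenuse makes either of the triangles PDB, PEA Pythagorean. -/
/-!
The integers `m² - n²` and `m² + n²` are coprime, so a Bézout identity writes `t` as an integer
combination of `t * (m² - n²)` and `t * (m² + n²)`. Hence `t` is itself an integer.
-/

theorem isCoprime_sub_add {R : Type*} [CommRing R] {x y : R} (hxy : IsCoprime x y)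
    (htwo : IsCoprime (x + y) 2) : IsCoprime (x - y) (x + y) := by
  have hy : IsCoprime (x + y) y := by simpa using hxy.add_mul_right_left 1
  have hsub : x - y = -(2 * y) + (x + y) * 1 := by ring
  rw [hsub]
  exact ((htwo.mul_right hy).neg_right.add_mul_left_right 1).symm

theorem isCoprime_sq_sub_sq_sq_add_sq {R : Type*} [CommRing R] {x y : R} (hxy : IsCoprime x y)
    (htwo : IsCoprime (x + y) 2) : IsCoprime (x ^ 2 - y ^ 2) (x ^ 2 + y ^ 2) := by
  have hsq : x ^ 2 + y ^ 2 = (x + y) ^ 2 + 2 * -(x * y) := by ring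
  refine isCoprime_sub_add hxy.pow ?_
  rw [hsq]
  exact htwo.pow_left.add_mul_left_left _

theorem mem_of_isCoprime_of_smul_mem {R M : Type*} [CommSemiring R] [AddCommMonoid M] [Module R M]
    {N : Submodule R M} {a b : R} {x : M} (hab : IsCoprime a b) (ha : a • x ∈ N)
    (hb : b • x ∈ N) : x ∈ N := by
  obtain ⟨u, v, huv⟩ := hab
  rw [← one_smul R x, ← huv, add_smul, mul_smul, mul_smul]
  exact N.add_mem (N.smul_mem u ha) (N.smul_mem v hb)

theorem theorem2_i_primitive_general {R : Type*} [Ring R] {m n : ℤ} (hcop : IsCoprime m n)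
    (hpar : Odd (m + n)) {t : R} (ha : ∃ k : ℤ, t * ((m : R) ^ 2 - n ^ 2) = k)
    (hc : ∃ k : ℤ, t * ((m : R) ^ 2 + n ^ 2) = k) : ∃ k : ℤ, t = k := by
  have htwo : IsCoprime (m + n) 2 := Int.isCoprime_two_right.mpr hpar
  have smul_mem_one {a : ℤ} (h : ∃ k : ℤ, t * (a : R) = k) : a • t ∈ (1 : Submodule ℤ R) := by
    simpa only [Submodule.mem_one, zsmul_eq_mul', eq_intCast, eq_comm] using h
  have ht : t ∈ (1 : Submodule ℤ R) :=
    mem_of_isCoprime_of_smul_mem (isCoprime_sq_sub_sq_sq_add_sq hcop htwo)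
      (smul_mem_one (by exact_mod_cast ha)) (smul_mem_one (by exact_mod_cast hc))
  simpa only [Submodule.mem_one, eq_intCast, eq_comm] using ht

theorem theorem2_i_primitive (m n : ℕ) (hm : 0 < m) (hn : 0 < n)
    (hmn : n < m) (hcop : Nat.gcd m n = 1) (hpar : (m + n) % 2 = 1) :
    ¬ ∃ t : ℝ, 0 < t ∧ t < 1 ∧
      (∃ k : ℤ, t * ((m : ℝ) ^ 2 - n ^ 2) = k) ∧
      (∃ k : ℤ, t * (2 * m * n) = k) ∧
      (∃ k : ℤ, t * ((m : ℝ) ^ 2 + n ^ 2) = k) := by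
  rintro ⟨t, ht0, ht1, ha, -, hc⟩
  obtain ⟨k, rfl⟩ := theorem2_i_primitive_general (Nat.isCoprime_iff_coprime.mpr hcop)
    (mod_cast Nat.odd_iff.mpr hpar) (mod_cast ha) (mod_cast hc)
  norm_cast at ht0 ht1
  omega
end

section
/- Let m, n be positive integers with m > n, gcd(m,n) = 1, and m + n odd, and let d = 3, so a = 3*(m^2-n^2), b = 3*(2*m*n), c = 3*(m^2+n^2). For a real number t with 0 < t < 1, the three numbers t*a, t*b, t*c are all integers if and only if t = 1/3 or t = 2/3. -/
/-!
For coprime `m`, `n` of opposite parity the primitive legs `m ^ 2 - n ^ 2` and `2 * m * n` are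
coprime, so by Bézout `t * d` is an integral combination of the two scaled legs. Hence the scaled
legs are integers only if `t * d` is one.
-/

theorem exists_eq_map_of_isCoprime {A B : Type*} [CommSemiring A] [Semiring B] (f : A →+* B)
    {a b : A} (hab : IsCoprime a b) {x : B} (ha : ∃ k, x * f a = f k)
    (hb : ∃ k, x * f b = f k) : ∃ k, x = f k := by
  obtain ⟨u, v, huv⟩ := hab
  obtain ⟨k, hk⟩ := ha
  obtain ⟨l, hl⟩ := hb
  refine ⟨k * u + l * v, ?_⟩
  calc
    x = x * f (a * u + b * v) := by rw [mul_comm a, mul_comm b, huv, map_one, mul_one]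
    _ = x * f a * f u + x * f b * f v := by simp only [map_add, map_mul, mul_add, mul_assoc]
    _ = f (k * u + l * v) := by rw [hk, hl, map_add, map_mul, map_mul]

theorem isCoprime_sq_sub_sq_two_mul {m n : ℤ} (hcop : IsCoprime m n) (hpar : Odd (m + n)) :
    IsCoprime (m ^ 2 - n ^ 2) (2 * m * n) := by
  have hparity : m % 2 = 0 ∧ n % 2 = 1 ∨ m % 2 = 1 ∧ n % 2 = 0 := by grind
  exact Int.isCoprime_iff_gcd_eq_one.mpr <| (PythagoreanTriple.coprime_classification.mpr
    ⟨m, n, .inl ⟨rfl, rfl⟩, .inl rfl, Int.isCoprime_iff_gcd_eq_one.mp hcop, hparity⟩).2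

theorem exists_intCast_eq_mul_pythagoreanTriple_iff {R : Type*} [Ring R] {m n : ℤ}
    (hcop : IsCoprime m n) (hpar : Odd (m + n)) (x : R) :
    ((∃ k : ℤ, x * ((m : R) ^ 2 - n ^ 2) = k) ∧ (∃ k : ℤ, x * (2 * m * n) = k) ∧
      (∃ k : ℤ, x * ((m : R) ^ 2 + n ^ 2) = k)) ↔ ∃ k : ℤ, x = k := by
  constructor
  · rintro ⟨h_sub, h_mul, -⟩
    apply exists_eq_map_of_isCoprime (Int.castRingHom R) (isCoprime_sq_sub_sq_two_mul hcop hpar)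
    · simpa using h_sub
    · simpa using h_mul
  · rintro ⟨k, rfl⟩
    exact ⟨⟨k * (m ^ 2 - n ^ 2), by push_cast; rfl⟩, ⟨k * (2 * m * n), by push_cast; rfl⟩,
      ⟨k * (m ^ 2 + n ^ 2), by push_cast; rfl⟩⟩

section OrderedField

variable {K : Type*} [Field K] [LinearOrder K] [IsStrictOrderedRing K]

theorem exists_intCast_eq_mul_natCast_iff {d : ℕ} (hd : 0 < d) {t : K} (ht0 : 0 < t)
    (ht1 : t < 1) : (∃ k : ℤ, t * d = k) ↔ ∃ j ∈ Finset.Ioo 0 d, t = j / d := by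
  have hd' : (0 : K) < d := Nat.cast_pos.mpr hd
  constructor
  · rintro ⟨k, hk⟩
    have hk0 : 0 < k := Int.cast_pos.mp (hk ▸ mul_pos ht0 hd' : (0 : K) < k)
    lift k to ℕ using hk0.le
    rw [Int.cast_natCast] at hk
    have hkd : k < d := Nat.cast_lt.mp (hk ▸ mul_lt_of_lt_one_left hd' ht1 : (k : K) < d)
    exact ⟨k, Finset.mem_Ioo.mpr ⟨Int.natCast_pos.mp hk0, hkd⟩, (eq_div_iff hd'.ne').mpr hk⟩
  · rintro ⟨j, -, rfl⟩
    exact ⟨j, by rw [div_mul_cancel₀ _ hd'.ne', Int.cast_natCast]⟩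

theorem theorem2_iii_d_eq_three_general {m n : ℤ} (hcop : IsCoprime m n) (hpar : Odd (m + n))
    {d : ℕ} (hd : 0 < d) {t : K} (ht0 : 0 < t) (ht1 : t < 1) :
    ((∃ k : ℤ, t * (d * ((m : K) ^ 2 - n ^ 2)) = k) ∧
     (∃ k : ℤ, t * (d * (2 * m * n)) = k) ∧
     (∃ k : ℤ, t * (d * ((m : K) ^ 2 + n ^ 2)) = k)) ↔ ∃ j ∈ Finset.Ioo 0 d, t = j / d := by
  simp only [← mul_assoc t (d : K)]
  rw [exists_intCast_eq_mul_pythagoreanTriple_iff hcop hpar,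
    exists_intCast_eq_mul_natCast_iff hd ht0 ht1]

end OrderedField

theorem theorem2_iii_d_eq_three (m n : ℕ) (hm : 0 < m) (hn : 0 < n)
    (hmn : n < m) (hcop : Nat.gcd m n = 1) (hpar : (m + n) % 2 = 1)
    (t : ℝ) (ht0 : 0 < t) (ht1 : t < 1) :
    ((∃ k : ℤ, t * (3 * ((m : ℝ) ^ 2 - n ^ 2)) = k) ∧
     (∃ k : ℤ, t * (3 * (2 * m * n)) = k) ∧
     (∃ k : ℤ, t * (3 * ((m : ℝ) ^ 2 + n ^ 2)) = k)) ↔ t = 1 / 3 ∨ t = 2 / 3 := by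
  have hodd : Odd ((m : ℤ) + n) := mod_cast Nat.odd_iff.mpr hpar
  simpa [show Finset.Ioo 0 3 = {1, 2} from rfl] using
    theorem2_iii_d_eq_three_general (Nat.isCoprime_iff_coprime.mpr hcop) hodd three_pos ht0 ht1
end

section
/- Let d, m, n be positive integers with m > n, gcd(m,n) = 1, and m + n odd. Then the rational numbers d*(m^2-n^2)/2 and d*(m^2+n^2)/2 are both integers if and only if d is even; and in every case (d*m*n)^2 + (d*(m^2-n^2)/2)^2 = (d*(m^2+n^2)/2)^2. Consequently, when P is the midpoint M of the hypotenuse, the six right triangles BDM, MEA, CDM, EMD, DCE, MEC (each with horizontal side d*m*n, vertical side d*(m^2-n^2)/2, and hypotenuse d*(m^2+n^2)/2) are Pythagorean if d is even, and non-Pythagorean if d is odd. -/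
/-!
Both `m ^ 2 - n ^ 2` and `m ^ 2 + n ^ 2` have the parity of `m + n`, hence are odd, so halving
`d * (m ^ 2 ± n ^ 2)` gives an integer exactly when the factor `2` comes from `d`.
-/

section Parity

variable {R : Type*} [CommRing R] {m n : R}

lemma odd_sq_add_sq_of_odd_add (h : Odd (m + n)) : Odd (m ^ 2 + n ^ 2) := by
  rw [show m ^ 2 + n ^ 2 = (m + n) ^ 2 - 2 * (m * n) by ring]
  exact h.pow.sub_even (even_two_mul _)

lemma odd_sq_sub_sq_of_odd_add (h : Odd (m + n)) : Odd (m ^ 2 - n ^ 2) := by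
  rw [show m ^ 2 - n ^ 2 = (m + n) ^ 2 - 2 * (n * (m + n)) by ring]
  exact h.pow.sub_even (even_two_mul _)

end Parity

section HalfIntegers

variable (K : Type*) [DivisionRing K] [CharZero K]

lemma exists_div_two_eq_intCast_iff_even (a : ℤ) :
    (∃ k : ℤ, (a : K) / 2 = k) ↔ Even a := by
  simp only [div_eq_iff (two_ne_zero' K), mul_two, Even]
  norm_cast

lemma exists_mul_div_two_eq_intCast_iff_even (a : ℤ) {b : ℤ} (hb : Odd b) :
    (∃ k : ℤ, (a : K) * b / 2 = k) ↔ Even a := by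
  rw [← Int.cast_mul, exists_div_two_eq_intCast_iff_even, Int.even_mul,
    or_iff_left (Int.not_even_iff_odd.mpr hb)]

end HalfIntegers

lemma sq_mul_mul_add_sq_half_sq_sub_sq {K : Type*} [Field K] [NeZero (2 : K)] (d m n : K) :
    (d * m * n) ^ 2 + (d * (m ^ 2 - n ^ 2) / 2) ^ 2 = (d * (m ^ 2 + n ^ 2) / 2) ^ 2 := by
  field_simp
  ring

theorem theorem3_midpoint_general (K : Type*) [Field K] [CharZero K] (d m n : ℤ)
    (hmn : Odd (m + n)) :
    (((∃ k : ℤ, (d : K) * ((m : K) ^ 2 - n ^ 2) / 2 = k) ∧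
      (∃ k : ℤ, (d : K) * ((m : K) ^ 2 + n ^ 2) / 2 = k)) ↔ Even d) ∧
    ((d : K) * m * n) ^ 2 + ((d : K) * ((m : K) ^ 2 - n ^ 2) / 2) ^ 2 =
      ((d : K) * ((m : K) ^ 2 + n ^ 2) / 2) ^ 2 := by
  have leg := exists_mul_div_two_eq_intCast_iff_even K d (odd_sq_sub_sq_of_odd_add hmn)
  have hypotenuse :=
    exists_mul_div_two_eq_intCast_iff_even K d (odd_sq_add_sq_of_odd_add hmn)
  push_cast at leg hypotenuse
  exact ⟨by rw [leg, hypotenuse, and_self], sq_mul_mul_add_sq_half_sq_sub_sq _ _ _⟩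

theorem theorem3_midpoint (d m n : ℕ) (hd : 0 < d) (hm : 0 < m) (hn : 0 < n)
    (hmn : n < m) (hcop : Nat.gcd m n = 1) (hpar : (m + n) % 2 = 1) :
    (((∃ k : ℤ, (d : ℚ) * ((m : ℚ) ^ 2 - n ^ 2) / 2 = k) ∧
      (∃ k : ℤ, (d : ℚ) * ((m : ℚ) ^ 2 + n ^ 2) / 2 = k)) ↔ Even d) ∧
    ((d : ℚ) * m * n) ^ 2 + ((d : ℚ) * ((m : ℚ) ^ 2 - n ^ 2) / 2) ^ 2 =
      ((d : ℚ) * ((m : ℚ) ^ 2 + n ^ 2) / 2) ^ 2 := by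
  have odd_add : Odd ((m : ℤ) + n) := by exact_mod_cast Nat.odd_iff.mpr hpar
  simpa using theorem3_midpoint_general ℚ d m n odd_add
end

section
/- Let d, m, n be positive integers with m > n, gcd(m,n) = 1, and m + n odd. Then there exists an integer δ with 1 ≤ δ ≤ d - 1 and δ*(2*m*n) = (d - δ)*(m^2 - n^2) if and only if (m^2 - n^2 + 2*m*n) divides d. Moreover, if d = K*(m^2 - n^2 + 2*m*n) for a positive integer K, then the unique such δ is δ = K*(m^2 - n^2), and the corresponding sidelengths are: for triangle BDI, |DI| = x = K*(2*m*n)*(m^2-n^2), |BD| = K*(m^2-n^2)^2, |BI| = K*(m^4 - n^4); and for triangle IEA, |IE| = y = K*(2*m*n)*(m^2-n^2), |EA| = K*(2*m*n)^2, |IA| = K*(2*m*n)*(m^2+n^2). -/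
/-!
Put `p = m² - n²` and `q = 2mn`. Clearing the subtraction, `δ q = (d - δ) p` says `δ (p + q) = d p`.
As `(p, q, m² + n²)` is a primitive Pythagorean triple, `p + q` is coprime to `p`, so this is
solvable in `δ` exactly when `p + q ∣ d`. For `d = K (p + q)` the solution `δ = K p` leaves
`d - δ = K q`, and every side length is a multiple of one of these two factors.
-/

theorem coprime_sq_sub_sq_two_mul_mul {m n : ℕ} (hnm : n ≤ m) (hcop : m.Coprime n)
    (hodd : Odd (m + n)) : (m ^ 2 - n ^ 2).Coprime (2 * m * n) := by
  have hparity : (m : ℤ) % 2 = 0 ∧ (n : ℤ) % 2 = 1 ∨ (m : ℤ) % 2 = 1 ∧ (n : ℤ) % 2 = 0 := by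
    rw [Nat.odd_iff] at hodd
    omega
  have htriple := PythagoreanTriple.coprime_classification.mpr
    ⟨(m : ℤ), (n : ℤ), .inl ⟨rfl, rfl⟩, .inl rfl, hcop, hparity⟩
  have hsq : n ^ 2 ≤ m ^ 2 := Nat.pow_le_pow_left hnm 2
  exact_mod_cast htriple.2

theorem sq_sub_sq_mul_sq_add_sq (m n : ℕ) :
    (m ^ 2 - n ^ 2) * (m ^ 2 + n ^ 2) = m ^ 4 - n ^ 4 := by
  rw [mul_comm, ← Nat.sq_sub_sq, ← pow_mul, ← pow_mul]

section Splitting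

variable {d p q δ : ℕ}

theorem mul_eq_sub_mul_iff_mul_add_eq_mul (hδ : δ ≤ d) :
    δ * q = (d - δ) * p ↔ δ * (p + q) = d * p := by
  obtain ⟨ε, rfl⟩ := Nat.exists_eq_add_of_le hδ
  rw [Nat.add_sub_cancel_left, mul_add, add_mul, Nat.add_left_cancel_iff]

theorem pos_of_mul_add_eq_mul (hd : 0 < d) (hp : 0 < p) (h : δ * (p + q) = d * p) : 0 < δ :=
  Nat.pos_of_mul_pos_right (h ▸ Nat.mul_pos hd hp)

theorem lt_of_mul_add_eq_mul (hd : 0 < d) (hq : 0 < q) (h : δ * (p + q) = d * p) : δ < d := by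
  have hlt : δ * (p + q) < d * (p + q) :=
    h ▸ Nat.mul_lt_mul_of_pos_left (Nat.lt_add_of_pos_right hq) hd
  exact Nat.lt_of_mul_lt_mul_right hlt

theorem one_le_and_le_sub_one_and_mul_eq_sub_mul_iff (hd : 0 < d) (hp : 0 < p) (hq : 0 < q) :
    (1 ≤ δ ∧ δ ≤ d - 1 ∧ δ * q = (d - δ) * p) ↔ δ * (p + q) = d * p := by
  constructor
  · rintro ⟨-, hle, h⟩
    exact (mul_eq_sub_mul_iff_mul_add_eq_mul (hle.trans (Nat.sub_le d 1))).mp h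
  · intro h
    have hlt := lt_of_mul_add_eq_mul hd hq h
    exact ⟨pos_of_mul_add_eq_mul hd hp h, Nat.le_sub_one_of_lt hlt,
      (mul_eq_sub_mul_iff_mul_add_eq_mul hlt.le).mpr h⟩

theorem exists_mul_add_eq_mul_iff_add_dvd (hpq : p.Coprime q) :
    (∃ δ, δ * (p + q) = d * p) ↔ p + q ∣ d := by
  have hsum : (p + q).Coprime p := by simpa using hpq.symm
  rw [← hsum.dvd_mul_right, dvd_iff_exists_eq_mul_left]
  simp only [eq_comm]

theorem mul_add_eq_mul_add_mul_iff {K : ℕ} (hpq : 0 < p + q) :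
    δ * (p + q) = K * (p + q) * p ↔ δ = K * p := by
  rw [mul_right_comm, Nat.mul_left_inj hpq.ne']

end Splitting

theorem theorem4_angle_bisector (d m n : ℕ) (hd : 0 < d) (hm : 0 < m) (hn : 0 < n)
    (hmn : n < m) (hcop : Nat.gcd m n = 1) (hpar : (m + n) % 2 = 1) :
    ((∃ δ : ℕ, 1 ≤ δ ∧ δ ≤ d - 1 ∧ δ * (2 * m * n) = (d - δ) * (m ^ 2 - n ^ 2)) ↔
      (m ^ 2 - n ^ 2 + 2 * m * n) ∣ d) ∧
    (∀ K : ℕ, 0 < K → d = K * (m ^ 2 - n ^ 2 + 2 * m * n) →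
      (∀ δ : ℕ, (1 ≤ δ ∧ δ ≤ d - 1 ∧ δ * (2 * m * n) = (d - δ) * (m ^ 2 - n ^ 2)) ↔
        δ = K * (m ^ 2 - n ^ 2)) ∧
      (K * (m ^ 2 - n ^ 2)) * (2 * m * n) = K * (2 * m * n) * (m ^ 2 - n ^ 2) ∧
      d * (m ^ 2 - n ^ 2) - (d - K * (m ^ 2 - n ^ 2)) * (m ^ 2 - n ^ 2)
        = K * (m ^ 2 - n ^ 2) ^ 2 ∧
      (K * (m ^ 2 - n ^ 2)) * (m ^ 2 + n ^ 2) = K * (m ^ 4 - n ^ 4) ∧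
      (d - K * (m ^ 2 - n ^ 2)) * (m ^ 2 - n ^ 2) = K * (2 * m * n) * (m ^ 2 - n ^ 2) ∧
      d * (2 * m * n) - (K * (m ^ 2 - n ^ 2)) * (2 * m * n) = K * (2 * m * n) ^ 2 ∧
      (d - K * (m ^ 2 - n ^ 2)) * (m ^ 2 + n ^ 2) = K * (2 * m * n) * (m ^ 2 + n ^ 2)) := by
  have hp : 0 < m ^ 2 - n ^ 2 := Nat.sub_pos_of_lt (Nat.pow_lt_pow_left hmn two_ne_zero)
  have hq : 0 < 2 * m * n := by positivity
  have hpq := coprime_sq_sub_sq_two_mul_mul hmn.le hcop (Nat.odd_iff.mpr hpar)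
  simp only [one_le_and_le_sub_one_and_mul_eq_sub_mul_iff hd hp hq, ← sq_sub_sq_mul_sq_add_sq]
  generalize m ^ 2 - n ^ 2 = p, 2 * m * n = q at *
  refine ⟨exists_mul_add_eq_mul_iff_add_dvd hpq, ?_⟩
  rintro K - rfl
  have sub_left : K * (p + q) - K * p = K * q := by rw [mul_add, Nat.add_sub_cancel_left]
  have sub_right : K * (p + q) - K * q = K * p := by rw [mul_add, Nat.add_sub_cancel]
  rw [sub_left, ← Nat.sub_mul, ← Nat.sub_mul, sub_left, sub_right]
  exact ⟨fun _ => mul_add_eq_mul_add_mul_iff (Nat.add_pos_left hp q),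
    mul_right_comm K p q, by ring, by ring, rfl, by ring, rfl⟩
end

section
/- Let d, m, n be positive integers with m > n, gcd(m,n) = 1, and m + n odd. Consider the seven rational numbers d*(m^2-n^2)^3/(m^2+n^2)^2, d*(m^2-n^2)^2*(2*m*n)/(m^2+n^2)^2, d*(m^2-n^2)*(2*m*n)^2/(m^2+n^2)^2, d*(2*m*n)^3/(m^2+n^2)^2, d*(m^2-n^2)^2/(m^2+n^2), d*(2*m*n)^2/(m^2+n^2), and d*(2*m*n)*(m^2-n^2)/(m^2+n^2). These seven numbers are all integers if and only if (m^2+n^2)^2 divides d. -/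
/-!
If `c ^ 2 ∣ d`, all seven numbers are visibly integers. Conversely, write `b = 2mn` and
`c = m ^ 2 + n ^ 2`. Since `c = (m + n) ^ 2 - b` and `m + n` is coprime to each of `2`, `m` and `n`,
the numbers `c` and `b` are coprime, so the integrality of `d * b ^ 3 / c ^ 2` alone forces
`c ^ 2 ∣ d`.
-/

theorem isCoprime_sq_add_sq_two_mul_mul {R : Type*} [CommRing R] {m n : R}
    (hmn : IsCoprime m n) (hadd : IsCoprime (m + n) 2) :
    IsCoprime (m ^ 2 + n ^ 2) (2 * m * n) := by
  have hm : IsCoprime (m + n) m := by simpa [add_comm] using hmn.symm.add_mul_left_left 1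
  have hn : IsCoprime (m + n) n := by simpa using hmn.add_mul_left_left 1
  have hsq : IsCoprime ((m + n) ^ 2) (2 * m * n) :=
    ((hadd.mul_right hm).mul_right hn).pow_left
  convert hsq.add_mul_left_left (-1) using 1
  ring

section FaithfulAlgebra

variable {R : Type*} (K : Type*) [CommRing R] [Field K] [Algebra R K] [FaithfulSMul R K]

theorem exists_algebraMap_div_eq_iff_dvd {x y : R} (hy : y ≠ 0) :
    (∃ k : R, algebraMap R K x / algebraMap R K y = algebraMap R K k) ↔ y ∣ x := by
  have hinj : Function.Injective (algebraMap R K) := FaithfulSMul.algebraMap_injective R K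
  have hy' : algebraMap R K y ≠ 0 := (map_ne_zero_iff _ hinj).mpr hy
  simp only [div_eq_iff hy', ← map_mul, hinj.eq_iff, dvd_iff_exists_eq_mul_left]

theorem theorem5_divisibility_general {a b c d : R} (hc : c ≠ 0) (hcb : IsCoprime c b) :
    ((∃ k : R, algebraMap R K (d * a ^ 3) / algebraMap R K (c ^ 2) = algebraMap R K k) ∧
     (∃ k : R, algebraMap R K (d * a ^ 2 * b) / algebraMap R K (c ^ 2) = algebraMap R K k) ∧
     (∃ k : R, algebraMap R K (d * a * b ^ 2) / algebraMap R K (c ^ 2) = algebraMap R K k) ∧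
     (∃ k : R, algebraMap R K (d * b ^ 3) / algebraMap R K (c ^ 2) = algebraMap R K k) ∧
     (∃ k : R, algebraMap R K (d * a ^ 2) / algebraMap R K c = algebraMap R K k) ∧
     (∃ k : R, algebraMap R K (d * b ^ 2) / algebraMap R K c = algebraMap R K k) ∧
     (∃ k : R, algebraMap R K (d * b * a) / algebraMap R K c = algebraMap R K k)) ↔
    c ^ 2 ∣ d := by
  have : IsDomain R := (FaithfulSMul.algebraMap_injective R K).isDomain
  simp only [exists_algebraMap_div_eq_iff_dvd K hc,
    exists_algebraMap_div_eq_iff_dvd K (pow_ne_zero 2 hc)]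
  constructor
  · rintro ⟨-, -, -, hb, -, -, -⟩
    exact hcb.pow.dvd_of_dvd_mul_right hb
  · intro hsq
    have hdvd : c ∣ d := (dvd_pow_self c two_ne_zero).trans hsq
    exact ⟨hsq.mul_right _, (hsq.mul_right _).mul_right _, (hsq.mul_right _).mul_right _,
      hsq.mul_right _, hdvd.mul_right _, hdvd.mul_right _, (hdvd.mul_right _).mul_right _⟩

end FaithfulAlgebra

theorem theorem5_divisibility (d m n : ℕ) (hd : 0 < d) (hm : 0 < m) (hn : 0 < n)
    (hmn : n < m) (hcop : Nat.gcd m n = 1) (hpar : (m + n) % 2 = 1) :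
    ((∃ k : ℤ, (d : ℚ) * ((m : ℚ) ^ 2 - n ^ 2) ^ 3 / ((m : ℚ) ^ 2 + n ^ 2) ^ 2 = k) ∧
     (∃ k : ℤ, (d : ℚ) * ((m : ℚ) ^ 2 - n ^ 2) ^ 2 * (2 * m * n) / ((m : ℚ) ^ 2 + n ^ 2) ^ 2 = k) ∧
     (∃ k : ℤ, (d : ℚ) * ((m : ℚ) ^ 2 - n ^ 2) * (2 * m * n) ^ 2 / ((m : ℚ) ^ 2 + n ^ 2) ^ 2 = k) ∧
     (∃ k : ℤ, (d : ℚ) * (2 * m * n) ^ 3 / ((m : ℚ) ^ 2 + n ^ 2) ^ 2 = k) ∧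
     (∃ k : ℤ, (d : ℚ) * ((m : ℚ) ^ 2 - n ^ 2) ^ 2 / ((m : ℚ) ^ 2 + n ^ 2) = k) ∧
     (∃ k : ℤ, (d : ℚ) * (2 * m * n) ^ 2 / ((m : ℚ) ^ 2 + n ^ 2) = k) ∧
     (∃ k : ℤ, (d : ℚ) * (2 * m * n) * ((m : ℚ) ^ 2 - n ^ 2) / ((m : ℚ) ^ 2 + n ^ 2) = k)) ↔
    (m ^ 2 + n ^ 2) ^ 2 ∣ d := by
  have hc : (m : ℤ) ^ 2 + n ^ 2 ≠ 0 := by positivity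
  have hadd : IsCoprime ((m : ℤ) + n) 2 := by
    exact_mod_cast Int.isCoprime_two_right.mpr (Nat.odd_iff.mpr hpar).natCast
  have hcb := isCoprime_sq_add_sq_two_mul_mul (Nat.isCoprime_iff_coprime.mpr hcop) hadd
  have hgeneral := theorem5_divisibility_general ℚ (a := (m : ℤ) ^ 2 - n ^ 2) (d := d) hc hcb
  simpa only [← Int.natCast_dvd_natCast, eq_intCast, Int.cast_natCast, push_cast] using hgeneral
end

section
/- Let m, n, M, N be positive integers with m > n, gcd(m,n) = 1, m + n odd, M > N, gcd(M,N) = 1, M + N odd, and let K be a positive integer. Set δ = K*m*n*(M^2 - N^2) and d = K*(m*n*(M^2 - N^2) + M*N*(m^2 - n^2)). Then 1 ≤ δ ≤ d - 1 and d ≥ 2; and with y = δ*(m^2 - n^2) and x = (d - δ)*(2*m*n), one has x = K*m*n*(m^2-n^2)*(2*M*N), y = K*m*n*(m^2-n^2)*(M^2-N^2), and x^2 + y^2 = (K*m*n*(m^2-n^2)*(M^2+N^2))^2. In particular x^2 + y^2 is a perfect square. -/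
/-!
For the legs `x = (d - δ) * (2 * m * n)` and `y = δ * (m ^ 2 - n ^ 2)` to be Pythagorean it is
enough that `x : y = 2 * M * N : M ^ 2 - N ^ 2`. This proportion is solved by
`δ = K * m * n * (M ^ 2 - N ^ 2)` and `d - δ = K * (M * N * (m ^ 2 - n ^ 2))`, and then `(x, y)` is
Euclid's pair `(2 * M * N, M ^ 2 - N ^ 2)` scaled by `K * m * n * (m ^ 2 - n ^ 2)`.
-/

-- The leg `v = a ^ 2 - b ^ 2` enters through `v + b ^ 2 = a ^ 2`, so that no subtraction occurs.
theorem euclid_sq_add_sq {R : Type*} [CommSemiring R] {a b v : R} (hv : v + b ^ 2 = a ^ 2) :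
    (2 * a * b) ^ 2 + v ^ 2 = (a ^ 2 + b ^ 2) ^ 2 :=
  calc
    (2 * a * b) ^ 2 + v ^ 2 = 4 * a ^ 2 * b ^ 2 + v ^ 2 := by ring
    _ = (v + b ^ 2 + b ^ 2) ^ 2 := by rw [← hv]; ring
    _ = (a ^ 2 + b ^ 2) ^ 2 := by rw [hv]

theorem mul_sq_add_mul_sq_eq {R : Type*} [CommSemiring R] {a b c : R} (k : R)
    (h : a ^ 2 + b ^ 2 = c ^ 2) : (k * a) ^ 2 + (k * b) ^ 2 = (k * c) ^ 2 := by
  simp only [mul_pow, ← mul_add, h]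

theorem family1_general (m n M N K : ℕ) (hn : 0 < n) (hmn : n < m) (hN : 0 < N) (hMN : N < M)
    (hK : 0 < K) (δ d : ℕ) (hδ : δ = K * m * n * (M ^ 2 - N ^ 2))
    (hd : d = K * (m * n * (M ^ 2 - N ^ 2) + M * N * (m ^ 2 - n ^ 2)))
    (x y : ℕ) (hy : y = δ * (m ^ 2 - n ^ 2)) (hx : x = (d - δ) * (2 * m * n)) :
    1 ≤ δ ∧ δ ≤ d - 1 ∧ 2 ≤ d ∧
    x = K * m * n * (m ^ 2 - n ^ 2) * (2 * M * N) ∧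
    y = K * m * n * (m ^ 2 - n ^ 2) * (M ^ 2 - N ^ 2) ∧
    x ^ 2 + y ^ 2 = (K * m * n * (m ^ 2 - n ^ 2) * (M ^ 2 + N ^ 2)) ^ 2 := by
  have hm : 0 < m := hn.trans hmn
  have hM : 0 < M := hN.trans hMN
  have hu : 0 < m ^ 2 - n ^ 2 := Nat.sub_pos_of_lt (Nat.pow_lt_pow_left hmn two_ne_zero)
  have hv : 0 < M ^ 2 - N ^ 2 := Nat.sub_pos_of_lt (Nat.pow_lt_pow_left hMN two_ne_zero)
  have hδ_pos : 0 < δ := by rw [hδ]; positivity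
  have hgap_pos : 0 < K * (M * N * (m ^ 2 - n ^ 2)) := by positivity
  have hd_add : d = δ + K * (M * N * (m ^ 2 - n ^ 2)) := by rw [hd, hδ]; ring
  have hx' : x = K * m * n * (m ^ 2 - n ^ 2) * (2 * M * N) := by
    rw [hx, hd_add, Nat.add_sub_cancel_left]; ring
  have hy' : y = K * m * n * (m ^ 2 - n ^ 2) * (M ^ 2 - N ^ 2) := by rw [hy, hδ]; ring
  have heuclid : (2 * M * N) ^ 2 + (M ^ 2 - N ^ 2) ^ 2 = (M ^ 2 + N ^ 2) ^ 2 :=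
    euclid_sq_add_sq (Nat.sub_add_cancel (Nat.pow_le_pow_left hMN.le 2))
  refine ⟨hδ_pos, by omega, by omega, hx', hy', ?_⟩
  rw [hx', hy']
  exact mul_sq_add_mul_sq_eq _ heuclid

theorem family1 (m n M N K : ℕ) (hm : 0 < m) (hn : 0 < n) (hmn : n < m)
    (hcop : Nat.gcd m n = 1) (hpar : (m + n) % 2 = 1)
    (hM : 0 < M) (hN : 0 < N) (hMN : N < M) (hcop' : Nat.gcd M N = 1)
    (hpar' : (M + N) % 2 = 1) (hK : 0 < K)
    (δ d : ℕ) (hδ : δ = K * m * n * (M ^ 2 - N ^ 2))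
    (hd : d = K * (m * n * (M ^ 2 - N ^ 2) + M * N * (m ^ 2 - n ^ 2)))
    (x y : ℕ) (hy : y = δ * (m ^ 2 - n ^ 2)) (hx : x = (d - δ) * (2 * m * n)) :
    1 ≤ δ ∧ δ ≤ d - 1 ∧ 2 ≤ d ∧
    x = K * m * n * (m ^ 2 - n ^ 2) * (2 * M * N) ∧
    y = K * m * n * (m ^ 2 - n ^ 2) * (M ^ 2 - N ^ 2) ∧
    x ^ 2 + y ^ 2 = (K * m * n * (m ^ 2 - n ^ 2) * (M ^ 2 + N ^ 2)) ^ 2 :=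
  family1_general m n M N K hn hmn hN hMN hK δ d hδ hd x y hy hx
end
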